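/- The eigenvalue -4 of the 19×19 ternary search tree urn matrix A has algebraic multiplicity 4 but geometric multiplicity 3 (the kernel of A + 4I has dimension 3); hence A is not diagonalisable. -/

import Mathlib

open Polynomial

/-- The 19×19 replacement matrix of the Pólya urn for protected nodes in ternary
search trees. -/
def Atern : Matrix (Fin 19) (Fin 19) ℚ :=
  !![-9, 2, 0, 0, 0, 0, 0, 0, 0, 0, 0, 0, 0, 0, 0, 0, 0, 0, 0;
     0, -8, 4, 1, 0, 0, 0, 0, 0, 0, 0, 0, 0, 0, 0, 0, 0, 0, 0;
     0, 0, -7, 0, 6, 0, 1, 0, 0, 0, 0, 0, 0, 0, 0, 0, 0, 0, 0;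
     0, 0, 0, -7, 0, 0, 2, 0, 0, 0, 0, 0, 0, 0, 0, 0, 0, 0, 0;
     0, 0, 0, 0, -6, 0, 0, 0, 1, 0, 0, 0, 0, 0, 0, 0, 0, 0, 0;
     9, 0, 0, 0, 0, -6, 0, 2, 0, 0, 0, 0, 0, 0, 0, 0, 0, 0, 0;
     0, 0, 0, 0, 0, 0, -6, 0, 4, 2, 0, 0, 0, 0, 0, 0, 0, 0, 0;
     0, 6, 0, 0, 0, 0, 0, -5, 0, 0, 4, 1, 0, 0, 0, 0, 0, 0, 0;
     0, 0, 0, 0, 0, 0, 0, 0, -5, 0, 0, 0, 2, 0, 0, 0, 0, 0, 0;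
     0, 0, 0, 0, 0, 0, 0, 0, 0, -5, 0, 0, 2, 0, 0, 0, 0, 0, 0;
     0, 0, 3, 0, 0, 0, 0, 0, 0, 0, -4, 0, 0, 0, 1, 0, 0, 0, 0;
     0, 0, 0, 6, 0, 0, 0, 0, 0, 0, 0, -4, 0, 0, 2, 0, 0, 0, 0;
     9, 6, 3, 6, 0, 6, 3, 3, 0, 3, 0, 3, -4, 3, 0, 0, 0, 0, 0;
     0, 0, 0, 0, 0, 6, 0, 0, 0, 0, 0, 0, 0, -3, 0, 2, 0, 0, 0;
     0, 0, 0, 0, 0, 0, 3, 0, 0, 0, 0, 0, 0, 0, -3, 0, 2, 0, 0;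
     0, 0, 0, 0, 0, 0, 0, 3, 0, 0, 0, 0, 0, 0, 0, -2, 0, 1, 0;
     0, 0, 0, 0, 0, 0, 0, 0, 0, 3, 0, 0, 0, 0, 0, 0, -2, 0, 0;
     0, 0, 0, 0, 0, 0, 0, 0, 0, 0, 0, 3, 0, 0, 0, 0, 0, -1, 0;
     0, 0, 0, 0, 0, 0, 0, 0, 0, 0, 0, 0, 0, 3, 0, 0, 0, 0, 0]

/-!
A triangular matrix shows its algebraic multiplicities on the diagonal, and once `-4` is moved to
the end of the diagonal, adding `4` leaves a row echelon form whose pivots give the geometric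
multiplicity. So we exhibit a full flag of `Atern`-invariant subspaces whose last four eigenvalues
are `-4`, along with the triangular matrix of `Atern` in an adapted basis. The two multiplicities
would coincide for a diagonalisable matrix.
-/

section SemiconjBy

variable {n R : Type*} [Fintype n] [DecidableEq n] [CommRing R] {P A B : Matrix n n R}

theorem charpoly_eq_of_semiconjBy (hP : IsUnit P.det) (h : SemiconjBy P B A) :
    A.charpoly = B.charpoly := by
  have hA : A = P * B * P⁻¹ := by
    rw [h.eq, Matrix.mul_nonsing_inv_cancel_right _ _ hP]
  rw [hA, Matrix.charpoly_mul_comm, Matrix.nonsing_inv_mul_cancel_left _ _ hP]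

theorem rank_eq_of_semiconjBy (hP : IsUnit P.det) (h : SemiconjBy P B A) :
    A.rank = B.rank := by
  rw [← Matrix.rank_mul_eq_left_of_isUnit_det P A hP, ← h.eq,
    Matrix.rank_mul_eq_right_of_isUnit_det P B hP]

theorem semiconjBy_sub_smul_one (h : SemiconjBy P B A) (μ : R) :
    SemiconjBy P (B - μ • 1) (A - μ • 1) :=
  h.sub_right ((Commute.one_right P).smul_right μ)

end SemiconjBy

theorem det_ne_zero_of_det_submatrix_ne_zero {n R : Type*} [Fintype n] [DecidableEq n]
    [CommRing R] {M : Matrix n n R} (r : n → n) (h : (M.submatrix r id).det ≠ 0) :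
    M.det ≠ 0 := by
  have hM : M.submatrix r id = (1 : Matrix n n R).submatrix r id * M :=
    (Matrix.one_submatrix_mul r (Equiv.refl n) M).symm
  intro h0
  rw [hM, Matrix.det_mul, h0, mul_zero] at h
  exact h rfl

theorem rootMultiplicity_prod_X_sub_C {ι R : Type*} [Fintype ι] [CommRing R] [IsDomain R]
    [DecidableEq R] (d : ι → R) (μ : R) :
    (∏ i, (X - C (d i))).rootMultiplicity μ = Fintype.card {i // d i = μ} := by
  have hroots : (∏ i, (X - C (d i))).roots = Finset.univ.val.map d := by
    rw [← roots_multiset_prod_X_sub_C (Finset.univ.val.map d), Multiset.map_map]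
    rfl
  rw [← count_roots, hroots, Multiset.count_map, Fintype.card_subtype]
  simp only [eq_comm (a := μ)]
  rfl

theorem pow_dvd_and_not_pow_succ_dvd_iff {R : Type*} [CommRing R] {p : R[X]} (hp : p ≠ 0)
    (a : R) (k : ℕ) :
    (X - C a) ^ k ∣ p ∧ ¬ (X - C a) ^ (k + 1) ∣ p ↔ p.rootMultiplicity a = k := by
  rw [← le_rootMultiplicity_iff hp, ← le_rootMultiplicity_iff hp]
  omega

theorem rank_add_finrank_ker_mulVecLin {m n K : Type*} [Fintype n] [Field K] (A : Matrix m n K) :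
    A.rank + Module.finrank K (LinearMap.ker A.mulVecLin) = Fintype.card n := by
  rw [Matrix.rank, LinearMap.finrank_range_add_finrank_ker, Module.finrank_fintype_fun_eq_card]

theorem finrank_ker_eq_rootMultiplicity_of_semiconjBy_diagonal {n K : Type*} [Fintype n]
    [DecidableEq n] [Field K] {P A : Matrix n n K} {d : n → K} (hP : IsUnit P.det)
    (h : SemiconjBy P (Matrix.diagonal d) A) (μ : K) :
    Module.finrank K (LinearMap.ker (A - μ • 1).mulVecLin) = A.charpoly.rootMultiplicity μ := by
  classical
  have hmult : A.charpoly.rootMultiplicity μ = Fintype.card {i // d i = μ} := by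
    rw [charpoly_eq_of_semiconjBy hP h, Matrix.charpoly_diagonal, rootMultiplicity_prod_X_sub_C]
  have hrank : (A - μ • 1).rank = Fintype.card {i // ¬ d i = μ} := by
    rw [rank_eq_of_semiconjBy hP (semiconjBy_sub_smul_one h μ), Matrix.smul_one_eq_diagonal,
      Matrix.diagonal_sub, Matrix.rank_diagonal]
    simp only [ne_eq, sub_eq_zero]
  have hnullity := rank_add_finrank_ker_mulVecLin (A - μ • 1)
  have hcompl := Fintype.card_subtype_compl fun i => d i = μ
  have hle := Fintype.card_subtype_le fun i => d i = μ
  omega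

/-- A basis adapted to a full flag of `Atern`-invariant subspaces: for every `k`, the first `k`
columns span an invariant subspace. The columns come from eigenvectors of `Atern`, with a
generalised eigenvector for `-4` as the last one, by eliminating the entries at the pivots
`AternFlagPivot` of the preceding columns. -/
def AternFlag : Matrix (Fin 19) (Fin 19) ℚ :=
  !![1, 0, 0, 0, 0, 0, 0, 0, 0, 0, 0, 0, 0, 0, 0, 0, 0, 0, 0;
     0, 0, 0, 1, 0, 0, 0, 0, 0, 0, 0, 0, 0, 0, 0, 0, 0, 0, 0;
     0, 0, 0, 0, 1, 0, 0, 0, 0, 0, 0, 0, 0, 0, 0, 0, 0, 0, 0;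
     0, 0, 0, 0, 0, 0, 1, 0, 0, 0, 0, 0, 0, 0, 0, 0, 0, 0, 0;
     0, 0, 0, 0, 0, 0, 0, 1, 0, 0, 0, 0, 0, 0, 0, 0, 0, 0, 0;
     -3, 1, 0, 0, 0, 0, 0, 0, 0, 0, 0, 0, 0, 0, 0, 0, 0, 0, 0;
     0, 0, 0, 0, 0, 0, 0, 0, 1, 0, 0, 0, 0, 0, 0, 0, 0, 0, 0;
     0, 0, 0, -2, -2, 1, 0, 0, 0, 0, 0, 0, 0, 0, 0, 0, 0, 0, 0;
     0, 0, 0, 0, 0, 0, 0, 0, 0, 1, 1, 1, 0, 0, 0, 0, 0, 0, 0;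
     0, 0, 0, 0, 0, 0, 0, 0, 0, 1, 1, 0, 0, 0, 0, 0, 0, 0, 0;
     0, 0, 0, 0, -1, 0, 0, -3, 0, 1, 0, -1, 0, 15, 0, 0, 1, 0, 0;
     0, 0, 0, 0, 0, 0, -2, 0, -1, 2, 0, 0, 0, 30, 0, 0, 0, 1, 0;
     0, 0, 0, 0, 0, 0, 0, 0, 0, 3, 3, 0, 3, 0, 0, 0, 0, 0, 0;
     3, -2, 0, 0, 1, -1, 0, 0, 0, 2, 4, 0, 5, -34, 2, 0, 0, 0, 0;
     0, 0, 0, 0, 0, 0, 0, 0, -1, 2, 0, -2, 0, 15, 0, 0, 0, 0, 0;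
     0, 0, 0, 1, 2, -1, 0, 3, 0, 1, 5, 2, 7, -55, 5, 1, 0, 0, 0;
     0, 0, 0, 0, 0, 0, 0, 0, 0, 1, 0, 0, 0, 0, 0, 0, 0, 0, 0;
     0, 0, 0, 0, 0, 0, 1, 0, 1, 0, 6, 1, 9, -63, 9, 3, 6, -4, 1;
     -1, 1, 1, 0, 0, 0, 0, 0, 0, 0, 0, 0, 0, 0, 0, 0, 0, 0, 0]

/-- The row of the pivot of each column of `AternFlag`; taking the rows in this order makes
`AternFlag` lower triangular. -/
def AternFlagPivot : Fin 19 → Fin 19 :=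
  ![0, 5, 18, 1, 2, 7, 3, 4, 6, 16, 9, 8, 12, 14, 13, 15, 10, 11, 17]

/-- The matrix of `Atern` in the basis `AternFlag`. The eigenvalue `-4` occupies the last four
places of the diagonal. -/
def AternTriangular : Matrix (Fin 19) (Fin 19) ℚ :=
  !![-9, 0, 0, 2, 0, 0, 0, 0, 0, 0, 0, 0, 0, 0, 0, 0, 0, 0, 0;
     0, -6, 0, 2, -4, 2, 0, 0, 0, 0, 0, 0, 0, 0, 0, 0, 0, 0, 0;
     0, 0, 0, 0, 7, -5, 0, 0, 0, 6, 12, 0, 15, -102, 6, 0, 0, 0, 0;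
     0, 0, 0, -8, 4, 0, 1, 0, 0, 0, 0, 0, 0, 0, 0, 0, 0, 0, 0;
     0, 0, 0, 0, -7, 0, 0, 6, 1, 0, 0, 0, 0, 0, 0, 0, 0, 0, 0;
     0, 0, 0, 0, 0, -5, 0, 0, 1, 6, 0, -4, 0, 90, 0, 0, 4, 1, 0;
     0, 0, 0, 0, 0, 0, -7, 0, 2, 0, 0, 0, 0, 0, 0, 0, 0, 0, 0;
     0, 0, 0, 0, 0, 0, 0, -6, 0, 1, 1, 1, 0, 0, 0, 0, 0, 0, 0;
     0, 0, 0, 0, 0, 0, 0, 0, -6, 6, 6, 4, 0, 0, 0, 0, 0, 0, 0;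
     0, 0, 0, 0, 0, 0, 0, 0, 0, 1, 3, 0, 0, 0, 0, 0, 0, 0, 0;
     0, 0, 0, 0, 0, 0, 0, 0, 0, 0, -2, 0, 6, 0, 0, 0, 0, 0, 0;
     0, 0, 0, 0, 0, 0, 0, 0, 0, 0, 0, -5, 0, 0, 0, 0, 0, 0, 0;
     0, 0, 0, 0, 0, 0, 0, 0, 0, 0, 0, 0, -5, -4, 2, 0, 0, 1, 0;
     0, 0, 0, 0, 0, 0, 0, 0, 0, 0, 0, 0, 0, -3, 0, 0, 0, 0, 0;
     0, 0, 0, 0, 0, 0, 0, 0, 0, 0, 0, 0, 0, 0, -3, 1, 2, -2, 0;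
     0, 0, 0, 0, 0, 0, 0, 0, 0, 0, 0, 0, 0, 0, 0, -4, 0, 0, 1;
     0, 0, 0, 0, 0, 0, 0, 0, 0, 0, 0, 0, 0, 0, 0, 0, -4, 0, 0;
     0, 0, 0, 0, 0, 0, 0, 0, 0, 0, 0, 0, 0, 0, 0, 0, 0, -4, 0;
     0, 0, 0, 0, 0, 0, 0, 0, 0, 0, 0, 0, 0, 0, 0, 0, 0, 0, -4]

theorem isUnit_det_AternFlag : IsUnit AternFlag.det := by
  have habove : ∀ i j, i < j → AternFlag (AternFlagPivot i) j = 0 := by decide +kernel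
  have htri : (AternFlag.submatrix AternFlagPivot id).IsLowerTriangular :=
    fun i j hij => habove i j hij
  have hdiag : ∀ i, AternFlag (AternFlagPivot i) i ≠ 0 := by decide +kernel
  refine (det_ne_zero_of_det_submatrix_ne_zero AternFlagPivot ?_).isUnit
  rw [Matrix.det_of_isLowerTriangular _ htri]
  exact Finset.prod_ne_zero_iff.mpr fun i _ => hdiag i

theorem semiconjBy_AternFlag : SemiconjBy AternFlag AternTriangular Atern := by
  unfold SemiconjBy
  decide +kernel

theorem isUpperTriangular_AternTriangular : AternTriangular.IsUpperTriangular := by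
  have hbelow : ∀ j i, j < i → AternTriangular i j = 0 := by decide +kernel
  exact fun i j hij => hbelow j i hij

theorem rootMultiplicity_charpoly_Atern : Atern.charpoly.rootMultiplicity (-4) = 4 := by
  rw [charpoly_eq_of_semiconjBy isUnit_det_AternFlag semiconjBy_AternFlag,
    Matrix.charpoly_of_isUpperTriangular _ isUpperTriangular_AternTriangular,
    rootMultiplicity_prod_X_sub_C]
  decide +kernel

theorem isPivotedBy_AternTriangular_sub :
    (AternTriangular - (-4 : ℚ) • 1).IsPivotedBy
      fun i => if i < 15 then i else if i = 15 then (18 : Fin 19) else ⊤ := by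
  decide +kernel

theorem finrank_ker_Atern_sub :
    Module.finrank ℚ (LinearMap.ker (Atern - (-4 : ℚ) • 1).mulVecLin) = 3 := by
  have hrank : (Atern - (-4 : ℚ) • 1).rank = 16 := by
    rw [rank_eq_of_semiconjBy isUnit_det_AternFlag
      (semiconjBy_sub_smul_one semiconjBy_AternFlag _), isPivotedBy_AternTriangular_sub.rank_eq]
    decide +kernel
  have hker := rank_add_finrank_ker_mulVecLin (Atern - (-4 : ℚ) • 1)
  rw [hrank, Fintype.card_fin] at hker
  omega

/-- The eigenvalue `-4` of `Atern` has algebraic multiplicity 4 but geometric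
multiplicity 3; hence `Atern` is not diagonalisable. -/
theorem Atern_not_diagonalisable :
    ((X + 4) ^ 4 ∣ Atern.charpoly ∧ ¬ (X + 4) ^ 5 ∣ Atern.charpoly) ∧
    Module.finrank ℚ (LinearMap.ker (Atern + (4 : ℚ) • 1).mulVecLin) = 3 ∧
    ¬ ∃ (P D : Matrix (Fin 19) (Fin 19) ℚ),
        IsUnit P.det ∧ D.IsDiag ∧ Atern = P * D * P⁻¹ := by
  have hX : (X + 4 : ℚ[X]) = X - C (-4) := by rw [C_neg, sub_neg_eq_add, map_ofNat]
  have hA : Atern + (4 : ℚ) • 1 = Atern - (-4 : ℚ) • 1 := by rw [neg_smul, sub_neg_eq_add]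
  rw [hX, hA]
  refine ⟨?_, finrank_ker_Atern_sub, ?_⟩
  · exact (pow_dvd_and_not_pow_succ_dvd_iff Atern.charpoly_monic.ne_zero (-4) 4).mpr
      rootMultiplicity_charpoly_Atern
  · rintro ⟨P, D, hP, hD, hPD⟩
    have hsemi : SemiconjBy P (Matrix.diagonal D.diag) Atern := by
      rw [hPD, hD.diagonal_diag, SemiconjBy, Matrix.nonsing_inv_mul_cancel_right _ _ hP]
    have hmult := finrank_ker_eq_rootMultiplicity_of_semiconjBy_diagonal hP hsemi (-4)
    rw [finrank_ker_Atern_sub, rootMultiplicity_charpoly_Atern] at hmult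
    omega
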